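/- Let T = T((m_1,1), …, (m_l,1); 0) be a tree of diameter 4 with l ≥ 2 (so m_1 < … < m_l are positive integers) and center vertex c, and let n be a positive integer. Let f_n: G(T) → ℤ/nℤ be the homomorphism determined by sending the canonical generator c to 1 and every other canonical generator to 0. Then the kernel of f_n is isomorphic to the right-angled Artin group G(T((n·m_1,1), …, (n·m_l,1); 0)). -/

import Mathlib

/-!
Write `z`, `pᵢ`, `xᵢⱼₖ` (`k < n`) for the canonical generators of the target group `G'`, and let
`σ` be the endomorphism of `G'` which fixes `z` and each `pᵢ`, sends `xᵢⱼₖ` to `xᵢⱼ₍ₖ₊₁₎` for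
`k + 1 < n`, and wraps around by `xᵢⱼ₍ₙ₋₁₎ ↦ z xᵢⱼ₀ z⁻¹`. Then `σ ^ n` is conjugation by `z`
(`sigma_iterate_n`), so `σ` is an automorphism and `S = G' ⋊ ℤ` (the generator `t` of `ℤ` acting
by `σ`) contains the central element `z⁻¹ tⁿ`.

The homomorphism `φ : G' → G(T)`, `z ↦ cⁿ`, `pᵢ ↦ pᵢ`, `xᵢⱼₖ ↦ cᵏ xᵢⱼ c⁻ᵏ`, turns `σ` into
conjugation by `c` (`emb_sigma`), hence extends to `S → G(T)`, `t ↦ c`. The extension hits all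
canonical generators, so every element of `G(T)` has the form `φ(h) cᵏ`; since `cⁿ = φ(z)`, the
image of `φ` is exactly the kernel of `f`. Conversely `c ↦ t`, `pᵢ ↦ pᵢ`, `xᵢⱼ ↦ xᵢⱼ₀` defines a
homomorphism `G(T) → S / ⟨z⁻¹ tⁿ⟩` (`toQuot`) whose composite with `φ` is the natural map from `G'`
(`toQuot_emb`). That map is injective because a nontrivial power of `z⁻¹ tⁿ` has a nontrivial
component in `ℤ`; so `φ` is injective.
-/

/-- The defining relators of the right-angled Artin group of a simplicial graph:
one commutator for each edge. -/
def raagRels {V : Type} (G : SimpleGraph V) : Set (FreeGroup V) :=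
  {r | ∃ u v : V, G.Adj u v ∧
    r = FreeGroup.of u * FreeGroup.of v * (FreeGroup.of u)⁻¹ * (FreeGroup.of v)⁻¹}

/-- The right-angled Artin group of a simplicial graph. -/
abbrev RAAG {V : Type} (G : SimpleGraph V) : Type := PresentedGroup (raagRels G)

/-- Two groups are (abstractly) commensurable if they have isomorphic
subgroups of finite index. -/
def GroupsCommensurable (G H : Type*) [Group G] [Group H] : Prop :=
  ∃ (A : Subgroup G) (B : Subgroup H),
    A.FiniteIndex ∧ B.FiniteIndex ∧ Nonempty (↥A ≃* ↥B)

/-- The vertices of the tree `T((d₁,k₁),…,(d_l,k_l); q)` of diameter 4: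
a center, `q` hairs, `k i` pivots of degree `d i + 1` for each `i`,
and `d i` leaves attached to each such pivot. -/
inductive T4V (l : ℕ) (d k : Fin l → ℕ) (q : ℕ) : Type where
  | center : T4V l d k q
  | hair : Fin q → T4V l d k q
  | pivot : (i : Fin l) → Fin (k i) → T4V l d k q
  | leaf : (i : Fin l) → Fin (k i) → Fin (d i) → T4V l d k q

/-- Adjacency in the tree `T((d₁,k₁),…,(d_l,k_l); q)`: the center is joined to every
hair and every pivot, and each pivot is joined to its own leaves. -/
def t4Adj {l : ℕ} {d k : Fin l → ℕ} {q : ℕ} :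
    T4V l d k q → T4V l d k q → Prop
  | .center, .hair _ => True
  | .center, .pivot _ _ => True
  | .pivot i j, .leaf i' j' _ => (⟨i, j⟩ : Σ i, Fin (k i)) = ⟨i', j'⟩
  | _, _ => False

/-- The tree `T((d₁,k₁),…,(d_l,k_l); q)` of diameter 4, as a simple graph. -/
def t4Graph (l : ℕ) (d k : Fin l → ℕ) (q : ℕ) : SimpleGraph (T4V l d k q) :=
  SimpleGraph.fromRel t4Adj

namespace T4

/-! ### Homomorphisms out of the RAAG of a diameter-4 tree with one pivot for each index -/

section Lift

variable {l : ℕ} {d : Fin l → ℕ}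

/-- The RAAG of the tree `T((d₁,1),…,(d_l,1); 0)`. -/
abbrev A (d : Fin l → ℕ) : Type := RAAG (t4Graph l d (fun _ => 1) 0)

/-- The canonical generator at the center. -/
def cen (d : Fin l → ℕ) : A d := PresentedGroup.of T4V.center

/-- The canonical generator at the `i`-th pivot. -/
def piv (d : Fin l → ℕ) (i : Fin l) : A d := PresentedGroup.of (T4V.pivot i 0)

/-- The canonical generator at the `j`-th leaf of the `i`-th pivot. -/
def lf (d : Fin l → ℕ) (i : Fin l) (j : Fin (d i)) : A d := PresentedGroup.of (T4V.leaf i 0 j)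

theorem raag_comm {V : Type} (G : SimpleGraph V) {u v : V} (h : G.Adj u v) :
    Commute (PresentedGroup.of u : RAAG G) (PresentedGroup.of v) := by
  have : (PresentedGroup.mk (raagRels G)) (FreeGroup.of u * FreeGroup.of v *
      (FreeGroup.of u)⁻¹ * (FreeGroup.of v)⁻¹) = 1 :=
    PresentedGroup.one_of_mem ⟨u, v, h, rfl⟩
  simp only [map_mul, map_inv] at this
  exact mul_inv_eq_iff_eq_mul.mp (mul_inv_eq_one.mp this)

theorem cen_piv (i : Fin l) : Commute (cen d) (piv d i) :=
  raag_comm _ (by simp [t4Graph, t4Adj])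

theorem piv_lf (i : Fin l) (j : Fin (d i)) : Commute (piv d i) (lf d i j) :=
  raag_comm _ (by simp [t4Graph, t4Adj])

variable {H : Type*} [Group H]

/-- The map on vertices underlying `lift`. -/
def liftFun (c : H) (p : Fin l → H) (x : (i : Fin l) → Fin (d i) → H) :
    T4V l d (fun _ => 1) 0 → H
  | .center => c
  | .hair _ => 1
  | .pivot i _ => p i
  | .leaf i _ j => x i j

/-- The universal property: images of the generators satisfying the commutation relations. -/
def lift (c : H) (p : Fin l → H) (x : (i : Fin l) → Fin (d i) → H)
    (hp : ∀ i, Commute c (p i)) (hx : ∀ i j, Commute (p i) (x i j)) : A d →* H :=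
  PresentedGroup.toGroup (f := liftFun c p x) (by
    rintro r ⟨u, v, huv, rfl⟩
    have key : ∀ u v : T4V l d (fun _ => 1) 0, t4Adj u v →
        Commute (liftFun c p x u) (liftFun c p x v) := by
      intro u v h
      rcases u with _ | a | ⟨i, a⟩ | ⟨i, a, j⟩ <;> rcases v with _ | b | ⟨i', b⟩ | ⟨i', b, j'⟩ <;>
        simp only [t4Adj] at h
      · exact b.elim0
      · exact hp i'
      · obtain rfl := (Sigma.mk.inj h).1
        exact hx _ _
    have : Commute (liftFun c p x u) (liftFun c p x v) := by
      rcases ((SimpleGraph.fromRel_adj _ _ _).mp huv).2 with h | h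
      · exact key _ _ h
      · exact (key _ _ h).symm
    simp only [map_mul, map_inv, FreeGroup.lift_apply_of]
    rw [this.eq]
    group)

variable {c : H} {p : Fin l → H} {x : (i : Fin l) → Fin (d i) → H}
    {hp : ∀ i, Commute c (p i)} {hx : ∀ i j, Commute (p i) (x i j)}

@[simp] theorem lift_cen : lift c p x hp hx (cen d) = c := PresentedGroup.toGroup.of _
@[simp] theorem lift_piv (i) : lift c p x hp hx (piv d i) = p i := PresentedGroup.toGroup.of _
@[simp] theorem lift_lf (i) (j) : lift c p x hp hx (lf d i j) = x i j :=
  PresentedGroup.toGroup.of _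

theorem hom_ext {f g : A d →* H} (h1 : f (cen d) = g (cen d))
    (h2 : ∀ i, f (piv d i) = g (piv d i)) (h3 : ∀ i j, f (lf d i j) = g (lf d i j)) : f = g := by
  apply PresentedGroup.ext
  rintro (_ | a | ⟨i, a⟩ | ⟨i, a, j⟩)
  · exact h1
  · exact a.elim0
  · rw [Subsingleton.elim a 0]; exact h2 i
  · rw [Subsingleton.elim a 0]; exact h3 i j

theorem eq_top (K : Subgroup (A d)) (h1 : cen d ∈ K) (h2 : ∀ i, piv d i ∈ K)
    (h3 : ∀ i j, lf d i j ∈ K) : K = ⊤ := by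
  rw [eq_top_iff, ← PresentedGroup.closure_range_of, Subgroup.closure_le]
  rintro _ ⟨v, rfl⟩
  rcases v with _ | a | ⟨i, a⟩ | ⟨i, a, j⟩
  · exact h1
  · exact a.elim0
  · rw [Subsingleton.elim a 0]; exact h2 i
  · rw [Subsingleton.elim a 0]; exact h3 i j

end Lift

/-! ### The automorphism of the target group -/

section Main

variable {l : ℕ} {m : Fin l → ℕ} {n : ℕ} [NeZero n]

variable (m n) in
/-- The target group: the RAAG of the tree with `n * m i` leaves at the `i`-th pivot. -/
abbrev B : Type := A (fun i => n * m i)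

/-- The leaf generators of the target group, relabelled by pairs `(k, j)`, and extended to all
`a : ℕ` by `y (k + q n) = z ^ q * y k * z ^ (-q)`; corresponds to `c ^ a * xᵢⱼ * c ^ (-a)`. -/
def y (i : Fin l) (j : Fin (m i)) (a : ℕ) : B m n :=
  cen _ ^ (a / n) * lf (fun i => n * m i) i (finProdFinEquiv (Fin.ofNat n a, j)) *
    (cen _ ^ (a / n))⁻¹

theorem y_of_lt (i : Fin l) (j : Fin (m i)) (k : Fin n) :
    (y i j k : B m n) = lf (fun i => n * m i) i (finProdFinEquiv (k, j)) := by
  simp [y, Nat.div_eq_of_lt k.2]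

theorem y_add_n (i : Fin l) (j : Fin (m i)) (a : ℕ) :
    (y i j (a + n) : B m n) = cen _ * y i j a * (cen _)⁻¹ := by
  have h : Fin.ofNat n (a + n) = Fin.ofNat n a := by
    ext; simp
  simp only [y, h, Nat.add_div_right _ (Nat.pos_of_neZero n), pow_succ', mul_inv_rev]
  group

theorem piv_y (i : Fin l) (j : Fin (m i)) (a : ℕ) :
    Commute (piv _ i) (y i j a : B m n) := by
  have h : Commute (piv (fun i => n * m i) i) (cen _ ^ (a / n)) := (cen_piv i).symm.pow_right _
  exact (h.mul_right (piv_lf _ _)).mul_right h.inv_right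

/-- Leaf generators of the target are the `y i j k` with `k < n`. -/
theorem lf_eq (i : Fin l) (s : Fin (n * m i)) :
    lf (fun i => n * m i) i s =
      (y i (finProdFinEquiv.symm s).2 (finProdFinEquiv.symm s).1 : B m n) := by
  rw [y_of_lt, Prod.mk.eta, Equiv.apply_symm_apply]

/-- The endomorphism fixing the center and the pivots and shifting `y i j k` to
`y i j (k + 1)`. -/
def sigma : B m n →* B m n :=
  lift (cen _) (piv _)
    (fun i s => y i (finProdFinEquiv.symm s).2 ((finProdFinEquiv.symm s).1 + 1))
    cen_piv (fun _ _ => piv_y _ _ _)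

theorem sigma_cen : sigma (cen _ : B m n) = cen _ := lift_cen
theorem sigma_piv (i) : sigma (piv _ i : B m n) = piv _ i := lift_piv i

theorem sigma_y (i : Fin l) (j : Fin (m i)) (a : ℕ) :
    sigma (y i j a : B m n) = y i j (a + 1) := by
  induction a using Nat.strong_induction_on with
  | _ a ih =>
    rcases lt_or_ge a n with h | h
    · have := y_of_lt (m := m) (n := n) i j ⟨a, h⟩
      simp only at this
      rw [this, sigma, lift_lf, Equiv.symm_apply_apply]
    · obtain ⟨b, rfl⟩ := Nat.exists_eq_add_of_le' h
      have := Nat.pos_of_neZero n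
      rw [y_add_n, map_mul, map_mul, map_inv, sigma_cen, ih b (by omega), ← y_add_n]
      congr 1; omega

theorem sigma_pow_y (i : Fin l) (j : Fin (m i)) (a b : ℕ) :
    (sigma^[b]) (y i j a : B m n) = y i j (a + b) := by
  induction b with
  | zero => rfl
  | succ b ih => rw [Function.iterate_succ_apply', ih, sigma_y, add_assoc]

theorem sigma_iterate_n (g : B m n) : (sigma^[n]) g = cen _ * g * (cen _)⁻¹ := by
  obtain ⟨e, he⟩ : ∃ e : B m n →* B m n, ∀ x, e x = (sigma^[n]) x :=
    ⟨HPow.hPow (α := Monoid.End (B m n)) sigma n,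
      fun x => congrFun (Monoid.End.coe_pow (B m n) sigma n) x⟩
  have h : e = (MulAut.conj (cen (fun i => n * m i))).toMonoidHom := by
    apply hom_ext
    · rw [he, Function.iterate_fixed sigma_cen]
      simp
    · intro i
      rw [he, Function.iterate_fixed (sigma_piv i)]
      simp [(cen_piv i).eq]
    · intro i s
      rw [he, lf_eq, sigma_pow_y, y_add_n]
      rfl
  rw [← he, h]
  rfl

theorem sigma_bijective : Function.Bijective (sigma : B m n → B m n) := by
  have h : (sigma : B m n → B m n)^[n] = MulAut.conj (cen _) := funext fun g => by
    rw [sigma_iterate_n]; rfl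
  have hb : Function.Bijective ((sigma : B m n → B m n)^[n]) := h ▸ MulEquiv.bijective _
  have iter : ∀ (F : B m n → B m n) (k : ℕ), k ≠ 0 → Function.Bijective (F^[k]) →
      Function.Bijective F := by
    intro F k hk hF
    obtain ⟨k, rfl⟩ := Nat.exists_eq_succ_of_ne_zero hk
    constructor
    · rw [Function.iterate_succ] at hF
      exact hF.1.of_comp
    · rw [Function.iterate_succ'] at hF
      exact hF.2.of_comp
  exact iter _ n (NeZero.ne n) hb

/-- `sigma` as an automorphism. -/
noncomputable def sig : MulAut (B m n) := MulEquiv.ofBijective sigma sigma_bijective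

theorem sig_apply (g : B m n) : sig g = sigma g := rfl

theorem sig_pow (b : ℕ) (g : B m n) : (sig ^ b) g = (sigma^[b]) g := by
  induction b with
  | zero => rfl
  | succ b ih => rw [pow_succ', MulAut.mul_apply, ih, Function.iterate_succ_apply', sig_apply]

/-! ### The semidirect product and its quotient -/

variable (m n) in
/-- The semidirect product of the target group with `ℤ` acting through `sig`. -/
abbrev S : Type := B m n ⋊[zpowersHom (MulAut (B m n)) sig] Multiplicative ℤ

/-- The generator of the factor `ℤ` of `S`. -/
noncomputable def t : S m n := SemidirectProduct.inr (Multiplicative.ofAdd 1)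

theorem t_pow_inl (b : ℕ) (g : B m n) :
    (t ^ b * SemidirectProduct.inl g * (t ^ b)⁻¹ : S m n) =
      SemidirectProduct.inl ((sigma^[b]) g) := by
  rw [t, ← map_pow, ← map_inv, ← SemidirectProduct.inl_aut, map_pow, ← sig_pow]
  simp

/-- The element `z⁻¹ tⁿ` of `S`. -/
noncomputable def w : S m n := SemidirectProduct.inl (cen _)⁻¹ * t ^ n

theorem w_central : (w : S m n) ∈ Subgroup.center (S m n) := by
  have hl (g : B m n) : Commute w (SemidirectProduct.inl g : S m n) := by
    have h := t_pow_inl (m := m) (n := n) n g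
    rw [sigma_iterate_n, mul_inv_eq_iff_eq_mul] at h
    rw [commute_iff_eq, w, mul_assoc, h]
    simp only [map_mul, map_inv]
    group
  have ht : Commute w (t : S m n) := by
    have h := t_pow_inl (m := m) (n := n) 1 (cen _)⁻¹
    rw [Function.iterate_one, map_inv, map_inv, sigma_cen, map_inv, pow_one,
      mul_inv_eq_iff_eq_mul] at h
    exact Commute.mul_left h.symm ((Commute.refl t).pow_left n)
  rw [Subgroup.mem_center_iff]
  intro g
  have hr (k : Multiplicative ℤ) : (SemidirectProduct.inr k : S m n) = t ^ k.toAdd := by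
    rw [t, ← map_zpow, ← ofAdd_zsmul]; simp
  rw [← SemidirectProduct.inl_left_mul_inr_right g, hr]
  exact ((hl _).mul_right (ht.zpow_right _)).symm

instance : (Subgroup.zpowers (w : S m n)).Normal :=
  ⟨fun x hx g => by
    have : x ∈ Subgroup.center (S m n) := Subgroup.zpowers_le.mpr w_central hx
    rwa [Subgroup.mem_center_iff.mp this g, mul_inv_cancel_right]⟩

variable (m n) in
/-- The quotient of `S` by `⟨z⁻¹ tⁿ⟩`; it is a copy of the RAAG of the original tree. -/
abbrev Q : Type := S m n ⧸ Subgroup.zpowers (w : S m n)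

variable (m n) in
/-- The natural map from the target group to `Q`. -/
noncomputable def inc : B m n →* Q m n :=
  (QuotientGroup.mk' _).comp SemidirectProduct.inl

theorem inc_injective : Function.Injective (inc m n) := by
  rw [injective_iff_map_eq_one]
  intro g hg
  obtain ⟨k, hk⟩ := Subgroup.mem_zpowers_iff.mp ((QuotientGroup.eq_one_iff _).mp hg)
  -- The `ℤ`-component of `w ^ k` is `n * k`.
  have hr := congrArg (SemidirectProduct.rightHom) hk
  have hk0 : k = 0 := by
    simp only [w, t, map_zpow, map_mul, map_pow, SemidirectProduct.rightHom_inl,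
      SemidirectProduct.rightHom_inr, one_mul] at hr
    rw [← ofAdd_nsmul, ← ofAdd_zsmul, ofAdd_eq_one] at hr
    simpa [NeZero.ne n] using hr
  rw [hk0, zpow_zero] at hk
  exact SemidirectProduct.inl_injective (hk.symm.trans (map_one _).symm)

/-- The image of `t` in `Q`. -/
noncomputable def tq : Q m n := QuotientGroup.mk' _ t

theorem tq_pow_inc (b : ℕ) (g : B m n) :
    tq ^ b * inc m n g * (tq ^ b)⁻¹ = inc m n ((sigma^[b]) g) := by
  have := congrArg (QuotientGroup.mk' (Subgroup.zpowers (w : S m n))) (t_pow_inl b g)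
  rw [map_mul, map_mul, map_inv, map_pow] at this
  exact this

theorem tq_pow_n : (tq ^ n : Q m n) = inc m n (cen _) := by
  have h : QuotientGroup.mk' (Subgroup.zpowers (w : S m n)) w = 1 :=
    (QuotientGroup.eq_one_iff _).mpr (Subgroup.mem_zpowers _)
  have h' : QuotientGroup.mk' (Subgroup.zpowers (w : S m n))
      (SemidirectProduct.inl (cen _)⁻¹ * t ^ n) = 1 := h
  rw [map_mul, map_inv, map_inv, map_pow, inv_mul_eq_one] at h'
  exact h'.symm

theorem tq_piv (i : Fin l) : Commute tq (inc m n (piv _ i)) := by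
  have := tq_pow_inc (m := m) (n := n) 1 (piv _ i)
  rwa [Function.iterate_one, sigma_piv, pow_one, mul_inv_eq_iff_eq_mul] at this

variable (m n) in
/-- The homomorphism from the original RAAG to `Q` sending `c` to `t`. -/
noncomputable def toQuot : A m →* Q m n :=
  lift tq (fun i => inc m n (piv _ i)) (fun i j => inc m n (y i j 0))
    tq_piv (fun i j => (piv_y i j 0).map _)

/-! ### The embedding of the target group -/

variable (m n) in
/-- The homomorphism `z ↦ cⁿ`, `pᵢ ↦ pᵢ`, `xᵢⱼₖ ↦ cᵏ xᵢⱼ c⁻ᵏ`. -/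
noncomputable def emb : B m n →* A m :=
  lift (cen _ ^ n) (piv _)
    (fun i s => cen _ ^ ((finProdFinEquiv.symm s).1 : ℕ) * lf m i (finProdFinEquiv.symm s).2 *
      (cen _ ^ ((finProdFinEquiv.symm s).1 : ℕ))⁻¹)
    (fun i => (cen_piv i).pow_left n)
    (fun i s => by
      have h := (cen_piv (d := m) i).symm.pow_right ((finProdFinEquiv.symm s).1 : ℕ)
      exact (h.mul_right (piv_lf _ _)).mul_right h.inv_right)

omit [NeZero n] in
theorem emb_cen : emb m n (cen _) = cen _ ^ n := lift_cen
omit [NeZero n] in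
theorem emb_piv (i) : emb m n (piv _ i) = piv _ i := lift_piv i

theorem emb_y (i : Fin l) (j : Fin (m i)) (a : ℕ) :
    emb m n (y i j a) = cen _ ^ a * lf m i j * (cen _ ^ a)⁻¹ := by
  have h : cen m ^ a = (cen m ^ n) ^ (a / n) * cen m ^ (a % n) := by
    rw [← pow_mul, ← pow_add, Nat.div_add_mod]
  rw [y, map_mul, map_mul, map_inv, map_pow, emb_cen, emb, lift_lf, Equiv.symm_apply_apply, h]
  simp only [Fin.val_ofNat, mul_inv_rev, mul_assoc]

theorem emb_sigma (g : B m n) : emb m n (sigma g) = cen _ * emb m n g * (cen _)⁻¹ := by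
  have h : (emb m n).comp sigma = (MulAut.conj (cen m)).toMonoidHom.comp (emb m n) := by
    apply hom_ext
    · simp [sigma_cen, emb_cen, ← pow_succ', pow_succ]
    · intro i
      simp [sigma_piv, emb_piv, (cen_piv i).eq]
    · intro i s
      rw [lf_eq]
      simp [sigma_y, emb_y, pow_succ', mul_assoc]
  exact DFunLike.congr_fun h g

theorem toQuot_emb : (toQuot m n).comp (emb m n) = inc m n := by
  apply hom_ext
  · rw [MonoidHom.comp_apply, emb_cen, map_pow, toQuot, lift_cen, tq_pow_n]
  · intro i
    rw [MonoidHom.comp_apply, emb_piv, toQuot, lift_piv]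
  · intro i s
    rw [MonoidHom.comp_apply, lf_eq, emb_y, map_mul, map_mul, map_inv, map_pow, toQuot, lift_cen,
      lift_lf, tq_pow_inc, sigma_pow_y, zero_add]

theorem emb_injective : Function.Injective (emb m n) := by
  have h : Function.Injective (toQuot m n ∘ emb m n) := by
    rw [← MonoidHom.coe_comp, toQuot_emb]
    exact inc_injective
  exact h.of_comp

variable (m n) in
/-- The extension of `emb` to `S` with `t ↦ c`. -/
noncomputable def embS : S m n →* A m :=
  SemidirectProduct.lift (emb m n) (zpowersHom _ (cen m)) (by
    intro k
    -- Both sides are homomorphisms in `k`, so it is enough to intertwine for the generator.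
    have key : ∀ (k : ℤ) (g : B m n),
        emb m n ((sig ^ k) g) = cen m ^ k * emb m n g * (cen m ^ k)⁻¹ := by
      have h1 : ∀ g : B m n, emb m n (sig⁻¹ g) = (cen m)⁻¹ * emb m n g * cen m := by
        intro g
        have := emb_sigma (sig⁻¹ g)
        rw [← sig_apply, MulAut.apply_inv_self] at this
        rw [this]; group
      intro k
      induction k using Int.induction_on with
      | zero => simp
      | succ k ih =>
        intro g
        rw [add_comm, zpow_add, MulAut.mul_apply, zpow_one, sig_apply, emb_sigma, ih]
        group
      | pred k ih =>
        intro g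
        rw [sub_eq_neg_add, zpow_add, MulAut.mul_apply, zpow_neg_one, h1, ih]
        group
    refine MonoidHom.ext fun g => ?_
    simpa [zpowersHom_apply, ← map_zpow] using key k.toAdd g)

theorem exists_emb_mul (g : A m) : ∃ (h : B m n) (k : ℤ), g = emb m n h * cen _ ^ k := by
  have htop : (embS m n).range = ⊤ := by
    apply eq_top
    · exact ⟨t, by simp [embS, t]⟩
    · intro i
      exact ⟨SemidirectProduct.inl (piv _ i), by simp [embS, emb_piv]⟩
    · intro i j
      exact ⟨SemidirectProduct.inl (y i j 0), by simp [embS, emb_y]⟩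
  obtain ⟨s, rfl⟩ : g ∈ (embS m n).range := htop ▸ Subgroup.mem_top g
  refine ⟨s.left, s.right.toAdd, ?_⟩
  conv_lhs => rw [← SemidirectProduct.inl_left_mul_inr_right s, map_mul]
  rw [embS, SemidirectProduct.lift_inl, SemidirectProduct.lift_inr, zpowersHom_apply]

theorem range_emb (f : A m →* Multiplicative (ZMod n))
    (hc : f (cen m) = Multiplicative.ofAdd 1) (hp : ∀ i, f (piv m i) = 1)
    (hx : ∀ i j, f (lf m i j) = 1) : (emb m n).range = f.ker := by
  have hle : ∀ h, f (emb m n h) = 1 := by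
    have : f.comp (emb m n) = 1 := by
      apply hom_ext
      · simp [emb_cen, hc, ← ofAdd_nsmul]
      · intro i
        simp [emb_piv, hp]
      · intro i s
        rw [lf_eq]
        simp [emb_y, hx]
    exact fun h => DFunLike.congr_fun this h
  apply le_antisymm
  · rintro _ ⟨h, rfl⟩
    exact hle h
  · intro g hg
    obtain ⟨h, k, rfl⟩ := exists_emb_mul (n := n) g
    rw [MonoidHom.mem_ker, map_mul, hle, one_mul, map_zpow, hc, ← ofAdd_zsmul, ofAdd_eq_one,
      zsmul_one, ZMod.intCast_zmod_eq_zero_iff_dvd] at hg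
    obtain ⟨q, rfl⟩ := hg
    refine ⟨h * cen _ ^ q, ?_⟩
    rw [map_mul, map_zpow, emb_cen, zpow_mul, zpow_natCast]

end Main

end T4

theorem stmt19 (l : ℕ) (hl : 2 ≤ l) (m : Fin l → ℕ)
    (hm : StrictMono m) (hmpos : ∀ i, 0 < m i) (n : ℕ) (hn : 0 < n)
    (f : RAAG (t4Graph l m (fun _ => 1) 0) →* Multiplicative (ZMod n))
    (hfc : f (PresentedGroup.of (T4V.center : T4V l m (fun _ => 1) 0)) =
      Multiplicative.ofAdd 1)
    (hfother : ∀ x : T4V l m (fun _ => 1) 0, x ≠ T4V.center →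
      f (PresentedGroup.of x) = 1) :
    Nonempty (↥f.ker ≃* RAAG (t4Graph l (fun i => n * m i) (fun _ => 1) 0)) := by
  have : NeZero n := ⟨hn.ne'⟩
  have h := T4.range_emb f hfc (fun i => hfother _ (by simp)) (fun i j => hfother _ (by simp))
  exact ⟨((MonoidHom.ofInjective T4.emb_injective).trans (MulEquiv.subgroupCongr h)).symm⟩
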